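/- Let D ⊆ ℝ² be bounded open with Cheeger constant λ and maximal Cheeger set E₀ (so Per(E₀)/|E₀| = λ). Let u ∈ BV(ℝ²) be nonnegative, supported in D, with TV(u) = λ·∫ u. Then for almost every t > 0, the level set {u > t} is a Cheeger set of D, i.e. Per({u > t}) = λ·|{u > t}| whenever |{u > t}| > 0. -/

import Mathlib

open MeasureTheory Real Set Filter

noncomputable section

abbrev E2 := EuclideanSpace ℝ (Fin 2)

/-- Divergence of a vector field on the plane. -/
def div2 (z : E2 → E2) (x : E2) : ℝ := ∑ i : Fin 2, fderiv ℝ z x (EuclideanSpace.single i 1) i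

/-- The dual set defining the total variation. -/
def tvSet (u : E2 → ℝ) : Set ℝ :=
  {y | ∃ z : E2 → E2, ContDiff ℝ (⊤ : ℕ∞) z ∧ HasCompactSupport z ∧ (∀ x, ‖z x‖ ≤ 1) ∧
        y = ∫ x, u x * div2 z x}

/-- Total variation of a function on ℝ². -/
def TV (u : E2 → ℝ) : ℝ := sSup (tvSet u)

/-- `u` has bounded variation. -/
def HasBV (u : E2 → ℝ) : Prop := BddAbove (tvSet u)

/-- Perimeter of a set. -/
def Per (A : Set E2) : ℝ := TV (A.indicator 1)

/-- `A` has finite perimeter. -/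
def FinPer (A : Set E2) : Prop := HasBV (A.indicator 1)

/-- Lebesgue measure as a real number. -/
def volR (A : Set E2) : ℝ := (volume A).toReal

/-- Cheeger constant of a domain `D`. -/
def cheegerConst (D : Set E2) : ℝ :=
  sInf {q : ℝ | ∃ A : Set E2, MeasurableSet A ∧ FinPer A ∧ A ⊆ D ∧ 0 < volR A ∧ q = Per A / volR A}

/-- `A` is a Cheeger set of `D`. -/
def IsCheegerSet (D A : Set E2) : Prop :=
  MeasurableSet A ∧ FinPer A ∧ A ⊆ D ∧ 0 < volR A ∧ Per A / volR A = cheegerConst D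

/- Truncation splits the total variation: `TV (u - a)⁺ + TV (min u a) ≤ TV u` for `a ≥ 0`. For
smooth `u` this is the chain rule, because a convex combination of two test fields is a test field,
and mollification extends it to every integrable `u` of bounded variation. Applied to `min u t`, it
shows that `t ↦ TV (min u t)` is monotone and that its derivative, where it exists, dominates the
pairings of `1_{u > t}` with test fields, hence `Per {u > t}`. Integrating in `t` gives the coarea
inequality `∫₀^∞ Per {u > t} dt ≤ TV u`, the only half of the coarea formula that is needed: as
`λ |{u > t}| ≤ Per {u > t}` for almost every `t > 0` and `∫₀^∞ λ |{u > t}| dt = λ ∫ u = TV u` by the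
layer cake formula, equality holds for almost every `t > 0`. -/

section RealAnalysis

open scoped Convolution Topology

lemma integrable_min_const {α : Type*} [MeasurableSpace α] {μ : Measure α} {u : α → ℝ} {t : ℝ}
    (hu : Integrable u μ) (ht : 0 ≤ t) : Integrable (fun x => min (u x) t) μ := by
  refine hu.mono (hu.aestronglyMeasurable.inf aestronglyMeasurable_const) (.of_forall fun x => ?_)
  exact abs_le.2 ⟨le_min (neg_abs_le _) ((neg_nonpos.2 (abs_nonneg _)).trans ht),
    (min_le_left _ _).trans (le_abs_self _)⟩

/- Scheffé's lemma: only `(f - F i)⁺` is dominated (by `|f|`), and it controls `|F i - f|`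
through the convergence of the integrals. -/
lemma tendsto_integral_abs_sub_of_tendsto_integral {α ι : Type*} [MeasurableSpace α]
    {μ : Measure α} {l : Filter ι} [l.IsCountablyGenerated] {F : ι → α → ℝ} {f : α → ℝ}
    (hF : ∀ i, Integrable (F i) μ) (hF_nonneg : ∀ i, 0 ≤ᵐ[μ] F i) (hf : Integrable f μ)
    (hlim : ∀ᵐ x ∂μ, Tendsto (fun i => F i x) l (𝓝 (f x)))
    (hlim_int : Tendsto (fun i => ∫ x, F i x ∂μ) l (𝓝 (∫ x, f x ∂μ))) :
    Tendsto (fun i => ∫ x, |F i x - f x| ∂μ) l (𝓝 0) := by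
  have h_pos (i : ι) : Integrable (fun x => max (f x - F i x) 0) μ := (hf.sub (hF i)).pos_part
  have h_pos_lim : Tendsto (fun i => ∫ x, max (f x - F i x) 0 ∂μ) l (𝓝 0) := by
    suffices h : Tendsto (fun i => ∫ x, max (f x - F i x) 0 ∂μ) l (𝓝 (∫ _, 0 ∂μ)) by
      simpa only [integral_zero] using h
    refine tendsto_integral_filter_of_dominated_convergence (fun x => |f x|)
      (.of_forall fun i => (h_pos i).aestronglyMeasurable) (.of_forall fun i => ?_) hf.abs ?_
    · filter_upwards [hF_nonneg i] with x (hx : 0 ≤ F i x)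
      rw [Real.norm_of_nonneg (le_max_right _ _)]
      exact max_le (by linarith [le_abs_self (f x)]) (abs_nonneg _)
    · filter_upwards [hlim] with x hx
      simpa using (hx.const_sub (f x)).max (tendsto_const_nhds (x := (0 : ℝ)))
  have h_abs (a b : ℝ) : |a - b| = a - b + 2 * max (b - a) 0 := by
    rcases le_total a b with h | h
    · rw [abs_of_nonpos (by linarith), max_eq_left (by linarith)]; ring
    · rw [abs_of_nonneg (by linarith), max_eq_right (by linarith)]; ring
  have h_eq (i : ι) : ∫ x, |F i x - f x| ∂μ
      = (∫ x, F i x ∂μ) - (∫ x, f x ∂μ) + 2 * ∫ x, max (f x - F i x) 0 ∂μ := by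
    simp_rw [h_abs]
    rw [integral_add (by exact (hF i).sub hf) ((h_pos i).const_mul 2), integral_sub (hF i) hf,
      integral_const_mul]
  simp_rw [h_eq]
  simpa using (hlim_int.sub_const (∫ x, f x ∂μ)).add (h_pos_lim.const_mul 2)

section Mollification

variable {E ι : Type*} [NormedAddCommGroup E] [NormedSpace ℝ E] [FiniteDimensional ℝ E]
  [MeasurableSpace E] [BorelSpace E] {μ : Measure E} [μ.IsAddHaarMeasure]
  {φ : ι → ContDiffBump (0 : E)} {l : Filter ι} [l.IsCountablyGenerated] {K : ℝ} {u : E → ℝ}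

lemma tendsto_integral_abs_normed_convolution_sub_of_nonneg
    (hφ : Tendsto (fun i => (φ i).rOut) l (𝓝 0)) (hK : ∀ᶠ i in l, (φ i).rOut ≤ K * (φ i).rIn)
    (hu : Integrable u μ) (hu_nonneg : 0 ≤ u) :
    Tendsto (fun i => ∫ x, |((φ i).normed μ ⋆[ContinuousLinearMap.lsmul ℝ ℝ, μ] u) x - u x| ∂μ)
      l (𝓝 0) := by
  refine tendsto_integral_abs_sub_of_tendsto_integral
    (fun i => (φ i).integrable_normed.integrable_convolution _ hu)
    (fun i => .of_forall fun x => integral_nonneg fun t =>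
      mul_nonneg ((φ i).nonneg_normed t) (hu_nonneg _)) hu
    (ContDiffBump.ae_convolution_tendsto_right_of_locallyIntegrable hφ hK hu.locallyIntegrable)
    (tendsto_const_nhds.congr fun i => ?_)
  rw [integral_convolution _ (φ i).integrable_normed hu, (φ i).integral_normed]
  simp

lemma tendsto_integral_abs_normed_convolution_sub
    (hφ : Tendsto (fun i => (φ i).rOut) l (𝓝 0)) (hK : ∀ᶠ i in l, (φ i).rOut ≤ K * (φ i).rIn)
    (hu : Integrable u μ) :
    Tendsto (fun i => ∫ x, |((φ i).normed μ ⋆[ContinuousLinearMap.lsmul ℝ ℝ, μ] u) x - u x| ∂μ)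
      l (𝓝 0) := by
  let mollify (i : ι) (w : E → ℝ) : E → ℝ := (φ i).normed μ ⋆[ContinuousLinearMap.lsmul ℝ ℝ, μ] w
  have mollify_integrable (i : ι) {w : E → ℝ} (hw : Integrable w μ) : Integrable (mollify i w) μ :=
    (φ i).integrable_normed.integrable_convolution _ hw
  have mollify_exists (i : ι) {w : E → ℝ} (hw : Integrable w μ) :
      ConvolutionExists ((φ i).normed μ) w (ContinuousLinearMap.lsmul ℝ ℝ) μ :=
    (φ i).hasCompactSupport_normed.convolutionExists_left _ (φ i).continuous_normed
      hw.locallyIntegrable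
  have h_decomp : u + (fun x => max (-u x) 0) = fun x => max (u x) 0 := by
    ext x
    have := posPart_sub_negPart (u x)
    simp only [posPart_def, negPart_def] at this
    exact add_eq_of_eq_sub this.symm
  have h_conv (i : ι) (x : E) :
      mollify i u x + mollify i (fun x => max (-u x) 0) x = mollify i (fun x => max (u x) 0) x := by
    rw [← h_decomp]
    exact (congrFun ((mollify_exists i hu).distrib_add (mollify_exists i hu.neg_part)) x).symm
  have h_pos := tendsto_integral_abs_normed_convolution_sub_of_nonneg hφ hK hu.pos_part
    fun x => le_max_right (u x) 0
  have h_neg := tendsto_integral_abs_normed_convolution_sub_of_nonneg hφ hK hu.neg_part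
    fun x => le_max_right (-u x) 0
  refine squeeze_zero (fun i => integral_nonneg fun x => abs_nonneg _) (fun i => ?_)
    (by simpa using h_pos.add h_neg)
  have h_pos_int := ((mollify_integrable i hu.pos_part).sub hu.pos_part).abs
  have h_neg_int := ((mollify_integrable i hu.neg_part).sub hu.neg_part).abs
  refine (integral_mono ((mollify_integrable i hu).sub hu).abs (h_pos_int.add h_neg_int)
    fun x => ?_).trans_eq (integral_add h_pos_int h_neg_int)
  have h_eq : mollify i u x - u x = (mollify i (fun x => max (u x) 0) x - max (u x) 0)
      - (mollify i (fun x => max (-u x) 0) x - max (-u x) 0) := by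
    rw [← h_conv, ← congrFun h_decomp x, Pi.add_apply]
    ring
  change |mollify i u x - u x| ≤ _
  rw [h_eq]
  exact abs_sub _ _

end Mollification

section MonotoneDeriv

variable {g : ℝ → ℝ} {a M : ℝ}

lemma deriv_nonneg_of_monotoneOn_Ici (hg : MonotoneOn g (Ici a)) {t : ℝ} (ht : a < t) :
    0 ≤ deriv g t := by
  rw [← derivWithin_of_isOpen isOpen_Ioi ht]
  exact (hg.mono Ioi_subset_Ici_self).derivWithin_nonneg

lemma intervalIntegral_deriv_le_of_monotoneOn_Ici (hg : MonotoneOn g (Ici a))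
    (hM : ∀ t, a ≤ t → g t ≤ M) {b : ℝ} (hab : a ≤ b) : ∫ t in a..b, deriv g t ≤ M - g a := by
  have h_mem := MonotoneOn.intervalIntegral_deriv_mem_uIcc (f := g) (a := a) (b := b)
    (hg.mono (by rw [uIcc_of_le hab]; exact Icc_subset_Ici_self))
  rw [uIcc_of_le (sub_nonneg.2 (hg self_mem_Ici hab hab))] at h_mem
  linarith [h_mem.2, hM b hab]

lemma integrableOn_Ioi_deriv_of_monotoneOn_Ici (hg : MonotoneOn g (Ici a))
    (hM : ∀ t, a ≤ t → g t ≤ M) : IntegrableOn (deriv g) (Ioi a) := by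
  refine integrableOn_Ioi_of_intervalIntegral_norm_bounded (b := fun b : ℝ => max a b) (l := atTop)
    (M - g a) a (fun b => ?_) (tendsto_atTop_mono (le_max_right a) tendsto_id)
    (.of_forall fun b => ?_)
  · refine (MonotoneOn.intervalIntegrable_deriv (hg.mono ?_)).1
    rw [uIcc_of_le (le_max_left a b)]
    exact Icc_subset_Ici_self
  · refine le_of_eq_of_le
      (intervalIntegral.integral_congr_Ioo_of_le (le_max_left a b) fun t ht => ?_)
      (intervalIntegral_deriv_le_of_monotoneOn_Ici hg hM (le_max_left a b))
    exact Real.norm_of_nonneg (deriv_nonneg_of_monotoneOn_Ici hg ht.1)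

lemma setIntegral_Ioi_deriv_le_of_monotoneOn_Ici (hg : MonotoneOn g (Ici a))
    (hM : ∀ t, a ≤ t → g t ≤ M) : ∫ t in Ioi a, deriv g t ≤ M - g a :=
  le_of_tendsto (intervalIntegral_tendsto_integral_Ioi a
      (integrableOn_Ioi_deriv_of_monotoneOn_Ici hg hM) tendsto_id)
    ((eventually_ge_atTop a).mono fun _ => intervalIntegral_deriv_le_of_monotoneOn_Ici hg hM)

end MonotoneDeriv

end RealAnalysis

section Divergence

variable {f : E2 → ℝ} {z : E2 → E2}

lemma continuous_div2 (hz : ContDiff ℝ 1 z) : Continuous (div2 z) := by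
  have : Continuous (fderiv ℝ z) := hz.continuous_fderiv one_ne_zero
  unfold div2
  fun_prop

lemma hasCompactSupport_div2 (hz : HasCompactSupport z) : HasCompactSupport (div2 z) :=
  (hz.fderiv ℝ).comp_left (g := fun L : E2 →L[ℝ] E2 => ∑ i, L (EuclideanSpace.single i 1) i)
    (by simp)

@[simp]
lemma div2_zero (x : E2) : div2 0 x = 0 := by
  simp [div2]

lemma div2_comp_add_right (z : E2 → E2) (t x : E2) :
    div2 (fun y => z (y + t)) x = div2 z (x + t) := by
  simp only [div2, fderiv_comp_add_right]

lemma fderiv_apply_eq_sum (f : E2 → ℝ) (z : E2 → E2) :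
    (fun x => fderiv ℝ f x (z x))
      = fun x => ∑ i, fderiv ℝ f x (EuclideanSpace.single i 1) * z x i := by
  ext x
  conv_lhs => rw [← (EuclideanSpace.basisFun (Fin 2) ℝ).sum_repr (z x), map_sum]
  simp [mul_comm]

lemma integrable_mul_coord_of_hasCompactSupport (hf : Continuous f) (hz : Continuous z)
    (hz' : HasCompactSupport z) (i : Fin 2) : Integrable (fun x => f x * z x i) := by
  have h_coord : HasCompactSupport (fun x => z x i) := hz'.comp_left (g := fun y : E2 => y i) rfl
  exact Continuous.integrable_of_hasCompactSupport (by fun_prop) h_coord.mul_left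

lemma integrable_fderiv_apply_of_hasCompactSupport (hf : ContDiff ℝ 1 f) (hz : Continuous z)
    (hz' : HasCompactSupport z) : Integrable (fun x => fderiv ℝ f x (z x)) := by
  have : Continuous (fderiv ℝ f) := hf.continuous_fderiv one_ne_zero
  rw [fderiv_apply_eq_sum]
  exact integrable_finsetSum _ fun i _ =>
    integrable_mul_coord_of_hasCompactSupport (by fun_prop) hz hz' i

lemma integral_mul_div2 (hf : ContDiff ℝ 1 f) (hz : ContDiff ℝ 1 z) (hz' : HasCompactSupport z) :
    ∫ x, f x * div2 z x = -∫ x, fderiv ℝ f x (z x) := by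
  have : Continuous (fderiv ℝ f) := hf.continuous_fderiv one_ne_zero
  have : Continuous (fderiv ℝ z) := hz.continuous_fderiv one_ne_zero
  have h_left (i : Fin 2) :
      Integrable (fun x => f x * fderiv ℝ z x (EuclideanSpace.single i 1) i) :=
    integrable_mul_coord_of_hasCompactSupport hf.continuous (by fun_prop)
      ((hz'.fderiv ℝ).comp_left (g := fun L : E2 →L[ℝ] E2 => L (EuclideanSpace.single i 1)) rfl) i
  have h_right (i : Fin 2) :
      Integrable (fun x => fderiv ℝ f x (EuclideanSpace.single i 1) * z x i) :=
    integrable_mul_coord_of_hasCompactSupport (by fun_prop) hz.continuous hz' i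
  have h_parts (i : Fin 2) : ∫ x, f x * fderiv ℝ z x (EuclideanSpace.single i 1) i
      = -∫ x, fderiv ℝ f x (EuclideanSpace.single i 1) * z x i :=
    integral_bilinear_hasFDerivAt_right_eq_neg_left_of_integrable
      (B := ContinuousLinearMap.toSpanSingleton ℝ (EuclideanSpace.proj i : E2 →L[ℝ] ℝ))
      (h_right i) (h_left i)
      (integrable_mul_coord_of_hasCompactSupport hf.continuous hz.continuous hz' i)
      (fun x _ => (hf.differentiable one_ne_zero x).hasFDerivAt)
      fun x _ => (hz.differentiable one_ne_zero x).hasFDerivAt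
  simp_rw [div2, Finset.mul_sum]
  rw [fderiv_apply_eq_sum, integral_finsetSum _ fun i _ => h_left i,
    integral_finsetSum _ fun i _ => h_right i, ← Finset.sum_neg_distrib]
  exact Finset.sum_congr rfl fun i _ => h_parts i

end Divergence

/-- The admissible fields in the duality formula for the total variation: smooth, compactly
supported and of norm at most one everywhere. -/
structure IsTestField (z : E2 → E2) : Prop where
  contDiff : ContDiff ℝ (⊤ : ℕ∞) z
  hasCompactSupport : HasCompactSupport z
  norm_le_one : ∀ x, ‖z x‖ ≤ 1

namespace IsTestField

variable {u : E2 → ℝ} {z z₁ z₂ : E2 → E2}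

lemma zero : IsTestField 0 where
  contDiff := contDiff_const
  hasCompactSupport := .zero
  norm_le_one := by simp

lemma comp_add_right (hz : IsTestField z) (t : E2) : IsTestField (fun x => z (x + t)) where
  contDiff := hz.contDiff.comp (contDiff_id.add contDiff_const)
  hasCompactSupport := hz.hasCompactSupport.comp_homeomorph (Homeomorph.addRight t)
  norm_le_one x := hz.norm_le_one (x + t)

lemma smul_add_one_sub_smul (hz₁ : IsTestField z₁) (hz₂ : IsTestField z₂) {d : E2 → ℝ}
    (hd : ContDiff ℝ (⊤ : ℕ∞) d) (hd01 : ∀ x, d x ∈ Icc 0 1) :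
    IsTestField (fun x => d x • z₁ x + (1 - d x) • z₂ x) where
  contDiff := (hd.smul hz₁.contDiff).add ((contDiff_const.sub hd).smul hz₂.contDiff)
  hasCompactSupport := (hz₁.hasCompactSupport.smul_left (f := d)).add
    (hz₂.hasCompactSupport.smul_left (f := fun x => 1 - d x))
  norm_le_one x := by
    simpa using convex_closedBall (0 : E2) 1 (by simpa using hz₁.norm_le_one x)
      (by simpa using hz₂.norm_le_one x) (hd01 x).1 (sub_nonneg.2 (hd01 x).2)
      (add_sub_cancel _ _)

lemma contDiff_one (hz : IsTestField z) : ContDiff ℝ 1 z :=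
  hz.contDiff.of_le (by exact_mod_cast le_top)

lemma continuous_div2 (hz : IsTestField z) : Continuous (div2 z) :=
  _root_.continuous_div2 hz.contDiff_one

lemma hasCompactSupport_div2 (hz : IsTestField z) : HasCompactSupport (div2 z) :=
  _root_.hasCompactSupport_div2 hz.hasCompactSupport

lemma exists_abs_div2_le (hz : IsTestField z) : ∃ C, ∀ x, |div2 z x| ≤ C :=
  hz.continuous_div2.bounded_above_of_compact_support hz.hasCompactSupport_div2

lemma integrable_mul_div2 (hz : IsTestField z) (hu : LocallyIntegrable u) :
    Integrable (fun x => u x * div2 z x) :=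
  hu.integrable_smul_right_of_hasCompactSupport hz.continuous_div2 hz.hasCompactSupport_div2

section Limits

open scoped Topology

variable {ι : Type*} {l : Filter ι} {F : ι → E2 → ℝ}

lemma tendsto_integral_mul_div2_of_dominated [l.IsCountablyGenerated] (hz : IsTestField z)
    {bound : E2 → ℝ} (hF : ∀ᶠ i in l, AEStronglyMeasurable (F i))
    (hF_bound : ∀ᶠ i in l, ∀ x, |F i x| ≤ bound x) (hbound : LocallyIntegrable bound)
    (hlim : ∀ x, Tendsto (fun i => F i x) l (𝓝 (u x))) :
    Tendsto (fun i => ∫ x, F i x * div2 z x) l (𝓝 (∫ x, u x * div2 z x)) := by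
  refine tendsto_integral_filter_of_dominated_convergence (fun x => ‖bound x * div2 z x‖)
    (hF.mono fun i hi => hi.mul hz.continuous_div2.aestronglyMeasurable)
    (hF_bound.mono fun i hi => .of_forall fun x => ?_) (hz.integrable_mul_div2 hbound).norm
    (.of_forall fun x => (hlim x).mul_const _)
  rw [norm_mul, norm_mul]
  gcongr
  exact (hi x).trans (le_abs_self _)

lemma tendsto_integral_mul_div2_of_tendsto_integral_abs_sub (hz : IsTestField z)
    (hF : ∀ i, Integrable (F i)) (hu : Integrable u)
    (hlim : Tendsto (fun i => ∫ x, |F i x - u x|) l (𝓝 0)) :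
    Tendsto (fun i => ∫ x, F i x * div2 z x) l (𝓝 (∫ x, u x * div2 z x)) := by
  obtain ⟨C, hC⟩ := hz.exists_abs_div2_le
  rw [tendsto_iff_dist_tendsto_zero]
  refine squeeze_zero (fun i => dist_nonneg) (fun i => ?_) (by simpa using hlim.mul_const C)
  have h_diff : Integrable (fun x => F i x - u x) := (hF i).sub hu
  calc dist (∫ x, F i x * div2 z x) (∫ x, u x * div2 z x)
      = |∫ x, (F i x - u x) * div2 z x| := by
        simp_rw [sub_mul]
        rw [integral_sub (hz.integrable_mul_div2 (hF i).locallyIntegrable)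
          (hz.integrable_mul_div2 hu.locallyIntegrable), Real.dist_eq]
    _ ≤ ∫ x, |(F i x - u x) * div2 z x| := abs_integral_le_integral_abs
    _ ≤ ∫ x, |F i x - u x| * C := by
        refine integral_mono (hz.integrable_mul_div2 h_diff.locallyIntegrable).abs
          (h_diff.abs.mul_const C) fun x => ?_
        rw [abs_mul]
        gcongr
        exact hC x
    _ = (∫ x, |F i x - u x|) * C := integral_mul_const _ _

end Limits

end IsTestField

section TotalVariation

open scoped Convolution Topology

variable {u v : E2 → ℝ} {c : ℝ} {z : E2 → E2}

lemma tvSet_congr_ae (h : u =ᵐ[volume] v) : tvSet u = tvSet v := by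
  have h_int (z : E2 → E2) : ∫ x, u x * div2 z x = ∫ x, v x * div2 z x :=
    integral_congr_ae (h.mono fun x hx => by simp only [hx])
  simp only [tvSet, h_int]

lemma HasBV.integral_mul_div2_le_TV (hu : HasBV u) (hz : IsTestField z) :
    ∫ x, u x * div2 z x ≤ TV u :=
  le_csSup hu ⟨z, hz.contDiff, hz.hasCompactSupport, hz.norm_le_one, rfl⟩

lemma mem_upperBounds_tvSet (h : ∀ z, IsTestField z → ∫ x, u x * div2 z x ≤ c) :
    c ∈ upperBounds (tvSet u) := by
  rintro _ ⟨z, hz, hz', hz'', rfl⟩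
  exact h z ⟨hz, hz', hz''⟩

lemma hasBV_of_forall_le (h : ∀ z, IsTestField z → ∫ x, u x * div2 z x ≤ c) : HasBV u :=
  ⟨c, mem_upperBounds_tvSet h⟩

lemma TV_le_of_forall_le (h : ∀ z, IsTestField z → ∫ x, u x * div2 z x ≤ c) : TV u ≤ c :=
  csSup_le ⟨_, 0, IsTestField.zero.contDiff, IsTestField.zero.hasCompactSupport,
    IsTestField.zero.norm_le_one, rfl⟩ (mem_upperBounds_tvSet h)

lemma HasBV.TV_nonneg (hu : HasBV u) : 0 ≤ TV u := by
  simpa using hu.integral_mul_div2_le_TV .zero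

/- By Fubini, the left side averages the pairings of `u` with the translates of `z`. -/
lemma HasBV.integral_convolution_mul_div2_le (hu : HasBV u) (hu_int : Integrable u) {ρ : E2 → ℝ}
    (hρ : Integrable ρ) (hρ_nonneg : 0 ≤ ρ) (hz : IsTestField z) :
    ∫ x, (ρ ⋆[ContinuousLinearMap.lsmul ℝ ℝ, volume] u) x * div2 z x ≤ (∫ x, ρ x) * TV u := by
  obtain ⟨C, hC⟩ := hz.exists_abs_div2_le
  have h_joint : Integrable (fun p : E2 × E2 => ρ p.2 * (u (p.1 - p.2) * div2 z p.1))
      (volume.prod volume) := by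
    simpa [mul_assoc] using
      (hρ.convolution_integrand (ContinuousLinearMap.lsmul ℝ ℝ) hu_int).mul_bdd
        (hz.continuous_div2.comp continuous_fst).aestronglyMeasurable
        (.of_forall fun p => hC p.1)
  have h_translate (t : E2) : ∫ x, ρ t * (u (x - t) * div2 z x)
      = ρ t * ∫ y, u y * div2 (fun x => z (x + t)) y := by
    rw [integral_const_mul, ← integral_add_right_eq_self (fun x => u (x - t) * div2 z x) t]
    simp [div2_comp_add_right]
  calc ∫ x, (ρ ⋆[ContinuousLinearMap.lsmul ℝ ℝ, volume] u) x * div2 z x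
      = ∫ x, ∫ t, ρ t * (u (x - t) * div2 z x) := by
        simp only [convolution_def, ContinuousLinearMap.lsmul_apply, smul_eq_mul,
          ← integral_mul_const, mul_assoc]
    _ = ∫ t, ∫ x, ρ t * (u (x - t) * div2 z x) := integral_integral_swap h_joint
    _ = ∫ t, ρ t * ∫ y, u y * div2 (fun x => z (x + t)) y := by simp_rw [h_translate]
    _ ≤ ∫ t, ρ t * TV u := by
        refine integral_mono ?_ (hρ.mul_const _) fun t => mul_le_mul_of_nonneg_left
          (hu.integral_mul_div2_le_TV (hz.comp_add_right t)) (hρ_nonneg t)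
        simpa only [h_translate] using h_joint.integral_prod_right
    _ = (∫ x, ρ x) * TV u := integral_mul_const _ _

lemma HasBV.exists_seq_contDiff_tendsto (hu : HasBV u) (hu_int : Integrable u) :
    ∃ v : ℕ → E2 → ℝ, (∀ n, ContDiff ℝ (⊤ : ℕ∞) (v n)) ∧ (∀ n, Integrable (v n)) ∧
      (∀ n z, IsTestField z → ∫ x, v n x * div2 z x ≤ TV u) ∧
      Tendsto (fun n => ∫ x, |v n x - u x|) atTop (𝓝 0) := by
  let φ (n : ℕ) : ContDiffBump (0 : E2) :=
    ⟨1 / ((n : ℝ) + 1), 2 * (1 / ((n : ℝ) + 1)), by positivity,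
      lt_mul_of_one_lt_left (by positivity) one_lt_two⟩
  have hφ : Tendsto (fun n => (φ n).rOut) atTop (𝓝 0) := by
    simpa [φ] using (tendsto_one_div_add_atTop_nhds_zero_nat (𝕜 := ℝ)).const_mul 2
  refine ⟨fun n => (φ n).normed volume ⋆[ContinuousLinearMap.lsmul ℝ ℝ, volume] u,
    fun n => (φ n).hasCompactSupport_normed.contDiff_convolution_left _ (φ n).contDiff_normed
      hu_int.locallyIntegrable,
    fun n => (φ n).integrable_normed.integrable_convolution _ hu_int, fun n z hz => ?_,
    tendsto_integral_abs_normed_convolution_sub hφ (.of_forall fun n => le_rfl) hu_int⟩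
  simpa [(φ n).integral_normed] using hu.integral_convolution_mul_div2_le hu_int
    (φ n).integrable_normed (φ n).nonneg_normed hz

end TotalVariation

section ContractionSplitting

open scoped Topology

variable {u v : E2 → ℝ} {z z₁ z₂ : E2 → E2} {φ : ℝ → ℝ}

lemma lipschitzWith_one_of_deriv_mem_Icc (hφ : Differentiable ℝ φ)
    (hφ' : ∀ s, deriv φ s ∈ Icc 0 1) : LipschitzWith 1 φ :=
  lipschitzWith_of_nnnorm_deriv_le hφ fun s => by
    rw [← NNReal.coe_le_coe, coe_nnnorm, Real.norm_of_nonneg (hφ' s).1]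
    exact (hφ' s).2

lemma lipschitzWith_one_id_sub_of_deriv_mem_Icc (hφ : Differentiable ℝ φ)
    (hφ' : ∀ s, deriv φ s ∈ Icc 0 1) : LipschitzWith 1 (fun s => s - φ s) := by
  refine lipschitzWith_one_of_deriv_mem_Icc (differentiable_id.sub hφ) fun s => ?_
  have h_deriv : deriv (fun s => s - φ s) s = 1 - deriv φ s :=
    ((hasDerivAt_id s).sub (hφ s).hasDerivAt).deriv
  rw [h_deriv]
  exact ⟨sub_nonneg.2 (hφ' s).2, sub_le_self _ (hφ' s).1⟩

lemma abs_le_abs_of_lipschitzWith_one (hφ : LipschitzWith 1 φ) (hφ0 : φ 0 = 0) (s : ℝ) :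
    |φ s| ≤ |s| := by
  simpa [hφ0, Real.dist_eq] using hφ.dist_le_mul s 0

lemma IsTestField.tendsto_integral_comp_mul_div2 {ι : Type*} {l : Filter ι} {F : ι → E2 → ℝ}
    (hz : IsTestField z) (hφ : LipschitzWith 1 φ) (hφ0 : φ 0 = 0) (hF : ∀ i, Integrable (F i))
    (hu : Integrable u) (hlim : Tendsto (fun i => ∫ x, |F i x - u x|) l (𝓝 0)) :
    Tendsto (fun i => ∫ x, φ (F i x) * div2 z x) l (𝓝 (∫ x, φ (u x) * div2 z x)) := by
  have h_comp {w : E2 → ℝ} (hw : Integrable w) : Integrable (fun x => φ (w x)) :=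
    memLp_one_iff_integrable.1 (hφ.comp_memLp hφ0 (memLp_one_iff_integrable.2 hw))
  refine hz.tendsto_integral_mul_div2_of_tendsto_integral_abs_sub (fun i => h_comp (hF i))
    (h_comp hu) (squeeze_zero (fun i => integral_nonneg fun x => abs_nonneg _) (fun i => ?_) hlim)
  refine integral_mono ((h_comp (hF i)).sub (h_comp hu)).abs ((hF i).sub hu).abs fun x => ?_
  simpa [Real.dist_eq] using hφ.dist_le_mul (F i x) (u x)

/- By the chain rule, `∇(φ ∘ v) = φ'(v) ∇v` and `∇(v - φ ∘ v) = (1 - φ'(v)) ∇v`, so pairing them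
with `z₁` and `z₂` amounts to pairing `∇v` with a convex combination of `z₁` and `z₂`. -/
lemma exists_isTestField_integral_comp_add_eq (hv : ContDiff ℝ (⊤ : ℕ∞) v)
    (hφ : ContDiff ℝ (⊤ : ℕ∞) φ) (hφ' : ∀ s, deriv φ s ∈ Icc 0 1) (hz₁ : IsTestField z₁)
    (hz₂ : IsTestField z₂) :
    ∃ w, IsTestField w ∧
      (∫ x, φ (v x) * div2 z₁ x) + (∫ x, (v x - φ (v x)) * div2 z₂ x) = ∫ x, v x * div2 w x := by
  have hw := hz₁.smul_add_one_sub_smul hz₂ ((contDiff_infty_iff_deriv.1 hφ).2.comp hv)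
    fun x => hφ' (v x)
  refine ⟨_, hw, ?_⟩
  have h_le : (1 : WithTop ℕ∞) ≤ (⊤ : ℕ∞) := by exact_mod_cast le_top
  have hφv : ContDiff ℝ 1 (fun x => φ (v x)) := (hφ.comp hv).of_le h_le
  have hv1 : ContDiff ℝ 1 v := hv.of_le h_le
  have h_fderiv (x : E2) : fderiv ℝ (fun x => φ (v x)) x = deriv φ (v x) • fderiv ℝ v x :=
    ((hφ.differentiable (by simp) (v x)).hasDerivAt.comp_hasFDerivAt x
      (hv1.differentiable one_ne_zero x).hasFDerivAt).fderiv
  have h_fderiv_sub (x : E2) : fderiv ℝ (fun x => v x - φ (v x)) x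
      = (1 - deriv φ (v x)) • fderiv ℝ v x := by
    rw [fderiv_fun_sub (hv1.differentiable one_ne_zero x) (hφv.differentiable one_ne_zero x),
      h_fderiv, sub_smul, one_smul]
  rw [integral_mul_div2 hφv hz₁.contDiff_one hz₁.hasCompactSupport,
    integral_mul_div2 (hv1.sub hφv) hz₂.contDiff_one hz₂.hasCompactSupport,
    integral_mul_div2 hv1 hw.contDiff_one hw.hasCompactSupport, ← neg_add, ← integral_add
      (integrable_fderiv_apply_of_hasCompactSupport hφv hz₁.contDiff.continuous
        hz₁.hasCompactSupport)
      (integrable_fderiv_apply_of_hasCompactSupport (hv1.sub hφv) hz₂.contDiff.continuous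
        hz₂.hasCompactSupport)]
  simp [h_fderiv, h_fderiv_sub]

lemma HasBV.integral_comp_mul_div2_add_le (hu : HasBV u) (hu_int : Integrable u)
    (hφ : ContDiff ℝ (⊤ : ℕ∞) φ) (hφ' : ∀ s, deriv φ s ∈ Icc 0 1) (hφ0 : φ 0 = 0)
    (hz₁ : IsTestField z₁) (hz₂ : IsTestField z₂) :
    (∫ x, φ (u x) * div2 z₁ x) + (∫ x, (u x - φ (u x)) * div2 z₂ x) ≤ TV u := by
  obtain ⟨v, hv, hv_int, hv_le, hv_lim⟩ := hu.exists_seq_contDiff_tendsto hu_int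
  have hφd : Differentiable ℝ φ := hφ.differentiable (by simp)
  refine le_of_tendsto' ((hz₁.tendsto_integral_comp_mul_div2
    (lipschitzWith_one_of_deriv_mem_Icc hφd hφ') hφ0 hv_int hu_int hv_lim).add
    (hz₂.tendsto_integral_comp_mul_div2 (φ := fun s => s - φ s)
      (lipschitzWith_one_id_sub_of_deriv_mem_Icc hφd hφ') (by simp [hφ0]) hv_int hu_int hv_lim))
    fun n => ?_
  obtain ⟨w, hw, h_eq⟩ := exists_isTestField_integral_comp_add_eq (hv n) hφ hφ' hz₁ hz₂
  exact h_eq.trans_le (hv_le n w hw)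

end ContractionSplitting

/-- A smooth approximation, as `δ → 0`, of the truncation `s ↦ (s - a)⁺` at a level `a ≥ 0`. The
constant term makes it vanish at `0`, so that composition with it preserves integrability. -/
def smoothPosPart (a δ s : ℝ) : ℝ := (s + √((s - a) ^ 2 + δ ^ 2) - √(a ^ 2 + δ ^ 2)) / 2

section SmoothPosPart

open scoped Topology

variable {a δ : ℝ}

lemma smoothPosPart_zero_right (a δ : ℝ) : smoothPosPart a δ 0 = 0 := by
  simp [smoothPosPart]

lemma contDiff_smoothPosPart (a : ℝ) (hδ : 0 < δ) : ContDiff ℝ (⊤ : ℕ∞) (smoothPosPart a δ) := by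
  have h_sqrt : ContDiff ℝ (⊤ : ℕ∞) (fun s : ℝ => √((s - a) ^ 2 + δ ^ 2)) :=
    ContDiff.sqrt (by fun_prop) fun s => by positivity
  exact ((contDiff_id.add h_sqrt).sub contDiff_const).div_const 2

lemma hasDerivAt_smoothPosPart (a : ℝ) (hδ : 0 < δ) (s : ℝ) :
    HasDerivAt (smoothPosPart a δ) ((1 + (s - a) / √((s - a) ^ 2 + δ ^ 2)) / 2) s := by
  have h_sq : HasDerivAt (fun s => (s - a) ^ 2 + δ ^ 2) (2 * (s - a)) s := by
    simpa using (((hasDerivAt_id s).sub_const a).pow 2).add_const (δ ^ 2)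
  have h_sqrt := h_sq.sqrt (by positivity)
  refine ((((hasDerivAt_id s).add h_sqrt).sub_const (√(a ^ 2 + δ ^ 2))).div_const 2).congr_deriv ?_
  rw [mul_div_mul_left _ _ two_ne_zero]

lemma deriv_smoothPosPart_mem_Icc (a : ℝ) (hδ : 0 < δ) (s : ℝ) :
    deriv (smoothPosPart a δ) s ∈ Icc 0 1 := by
  rw [(hasDerivAt_smoothPosPart a hδ s).deriv]
  have h_pos : 0 < √((s - a) ^ 2 + δ ^ 2) := by positivity
  have h_abs : |s - a| ≤ √((s - a) ^ 2 + δ ^ 2) :=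
    Real.abs_le_sqrt (le_add_of_nonneg_right (sq_nonneg δ))
  have h_quot : |(s - a) / √((s - a) ^ 2 + δ ^ 2)| ≤ 1 := by
    rw [abs_div, abs_of_pos h_pos]
    exact div_le_one_of_le₀ h_abs h_pos.le
  constructor <;> linarith [abs_le.1 h_quot]

lemma tendsto_smoothPosPart (ha : 0 ≤ a) (s : ℝ) :
    Tendsto (fun δ => smoothPosPart a δ s) (𝓝[>] 0) (𝓝 (max (s - a) 0)) := by
  have h_cont : Continuous (fun δ => smoothPosPart a δ s) := by
    unfold smoothPosPart
    fun_prop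
  have h_zero : smoothPosPart a 0 s = max (s - a) 0 := by
    simp only [smoothPosPart, ne_eq, OfNat.ofNat_ne_zero, not_false_eq_true, zero_pow, add_zero,
      Real.sqrt_sq_eq_abs, abs_of_nonneg ha]
    rcases le_total s a with h | h
    · rw [max_eq_right (by linarith), abs_of_nonpos (by linarith)]; ring
    · rw [max_eq_left (by linarith), abs_of_nonneg (by linarith)]; ring
  exact h_zero ▸ (h_cont.tendsto 0).mono_left nhdsWithin_le_nhds

end SmoothPosPart

section Truncation

open scoped Topology

variable {u : E2 → ℝ} {a : ℝ} {z₁ z₂ : E2 → E2}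

lemma HasBV.integral_posPart_add_integral_min_le (hu : HasBV u) (hu_int : Integrable u)
    (ha : 0 ≤ a) (hz₁ : IsTestField z₁) (hz₂ : IsTestField z₂) :
    (∫ x, max (u x - a) 0 * div2 z₁ x) + (∫ x, min (u x) a * div2 z₂ x) ≤ TV u := by
  have h_min (s : ℝ) : s - max (s - a) 0 = min s a := by
    rw [← min_sub_sub_left, sub_sub_cancel, sub_zero, min_comm]
  have hδ : ∀ᶠ δ : ℝ in 𝓝[>] 0, 0 < δ := self_mem_nhdsWithin
  have h_diff {δ : ℝ} (hδ : 0 < δ) : Differentiable ℝ (smoothPosPart a δ) := fun s =>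
    (hasDerivAt_smoothPosPart a hδ s).differentiableAt
  have h_meas {δ : ℝ} (hδ : 0 < δ) : AEStronglyMeasurable (fun x => smoothPosPart a δ (u x)) :=
    (h_diff hδ).continuous.comp_aestronglyMeasurable hu_int.aestronglyMeasurable
  have h_lim₁ := hz₁.tendsto_integral_mul_div2_of_dominated (l := 𝓝[>] 0)
    (F := fun δ x => smoothPosPart a δ (u x)) (hδ.mono fun δ hδ => h_meas hδ)
    (hδ.mono fun δ hδ x => abs_le_abs_of_lipschitzWith_one
      (lipschitzWith_one_of_deriv_mem_Icc (h_diff hδ) (deriv_smoothPosPart_mem_Icc a hδ))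
      (smoothPosPart_zero_right a δ) (u x))
    hu_int.abs.locallyIntegrable fun x => tendsto_smoothPosPart ha (u x)
  have h_lim₂ := hz₂.tendsto_integral_mul_div2_of_dominated (l := 𝓝[>] 0)
    (F := fun δ x => u x - smoothPosPart a δ (u x))
    (hδ.mono fun δ hδ => hu_int.aestronglyMeasurable.sub (h_meas hδ))
    (hδ.mono fun δ hδ x => abs_le_abs_of_lipschitzWith_one
      (lipschitzWith_one_id_sub_of_deriv_mem_Icc (h_diff hδ) (deriv_smoothPosPart_mem_Icc a hδ))
      (by simp [smoothPosPart_zero_right]) (u x))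
    hu_int.abs.locallyIntegrable fun x => (tendsto_smoothPosPart ha (u x)).const_sub (u x)
  simp only [h_min] at h_lim₂
  exact le_of_tendsto (h_lim₁.add h_lim₂) (hδ.mono fun δ hδ =>
    hu.integral_comp_mul_div2_add_le hu_int (contDiff_smoothPosPart a hδ)
      (deriv_smoothPosPart_mem_Icc a hδ) (smoothPosPart_zero_right a δ) hz₁ hz₂)

end Truncation

/-- The total variation of `u` truncated from above at height `t`. Its derivative in `t` plays the
role of the perimeter of `{u > t}` in the coarea formula. -/
def truncTV (u : E2 → ℝ) (t : ℝ) : ℝ := TV (fun x => min (u x) t)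

section Coarea

open scoped Topology

variable {u : E2 → ℝ} {s t : ℝ} {z : E2 → E2}

lemma HasBV.integral_min_mul_div2_le_TV (hu : HasBV u) (hu_int : Integrable u) (ht : 0 ≤ t)
    (hz : IsTestField z) : ∫ x, min (u x) t * div2 z x ≤ TV u := by
  simpa using hu.integral_posPart_add_integral_min_le hu_int ht .zero hz

lemma HasBV.min_const (hu : HasBV u) (hu_int : Integrable u) (ht : 0 ≤ t) :
    HasBV (fun x => min (u x) t) :=
  hasBV_of_forall_le fun _ hz => hu.integral_min_mul_div2_le_TV hu_int ht hz

lemma HasBV.truncTV_nonneg (hu : HasBV u) (hu_int : Integrable u) (ht : 0 ≤ t) :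
    0 ≤ truncTV u t :=
  (hu.min_const hu_int ht).TV_nonneg

lemma HasBV.truncTV_le (hu : HasBV u) (hu_int : Integrable u) (ht : 0 ≤ t) : truncTV u t ≤ TV u :=
  TV_le_of_forall_le fun _ hz => hu.integral_min_mul_div2_le_TV hu_int ht hz

lemma HasBV.integral_posPart_min_sub_mul_div2_le (hu : HasBV u) (hu_int : Integrable u) (hs : 0 ≤ s)
    (hst : s ≤ t) (hz : IsTestField z) :
    ∫ x, max (min (u x) t - s) 0 * div2 z x ≤ truncTV u t - truncTV u s := by
  have ht := hs.trans hst
  rw [le_sub_comm]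
  refine TV_le_of_forall_le fun w hw => ?_
  have h_split := (hu.min_const hu_int ht).integral_posPart_add_integral_min_le
    (integrable_min_const hu_int ht) hs hz hw
  simp only [min_assoc, min_eq_right hst] at h_split
  exact le_sub_iff_add_le'.2 h_split

lemma HasBV.monotoneOn_truncTV (hu : HasBV u) (hu_int : Integrable u) :
    MonotoneOn (truncTV u) (Ici 0) := fun _ hs _ _ hst => by
  simpa using hu.integral_posPart_min_sub_mul_div2_le hu_int hs hst .zero

lemma tendsto_inv_mul_posPart_min_sub (t y : ℝ) :
    Tendsto (fun h => h⁻¹ * max (min y (t + h) - t) 0) (𝓝[>] 0) (𝓝 ((Ioi t).indicator 1 y)) := by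
  rcases le_or_gt y t with hy | hy
  · rw [indicator_of_notMem (notMem_Ioi.2 hy)]
    refine tendsto_const_nhds.congr fun h => ?_
    rw [max_eq_right (sub_nonpos.2 ((min_le_left _ _).trans hy)), mul_zero]
  · rw [indicator_of_mem (mem_Ioi.2 hy)]
    refine tendsto_const_nhds.congr' ?_
    filter_upwards [Ioo_mem_nhdsGT (sub_pos.2 hy)] with h hh
    rw [min_eq_right (by linarith [hh.2]), add_sub_cancel_left, max_eq_left hh.1.le,
      inv_mul_cancel₀ hh.1.ne', Pi.one_apply]

lemma abs_inv_mul_posPart_min_sub_le_one {h : ℝ} (hh : 0 < h) (t y : ℝ) :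
    |h⁻¹ * max (min y (t + h) - t) 0| ≤ 1 := by
  rw [abs_of_nonneg (by positivity), inv_mul_le_one₀ hh]
  exact max_le (by linarith [min_le_right y (t + h)]) hh.le

lemma HasBV.integral_indicator_mul_div2_le_deriv_truncTV (hu : HasBV u) (hu_int : Integrable u)
    (ht : 0 ≤ t) (hd : DifferentiableAt ℝ (truncTV u) t) (hz : IsTestField z) :
    ∫ x, {x | t < u x}.indicator 1 x * div2 z x ≤ deriv (truncTV u) t := by
  have h_pos : ∀ᶠ h : ℝ in 𝓝[>] 0, 0 < h := self_mem_nhdsWithin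
  have h_lim := hz.tendsto_integral_mul_div2_of_dominated (l := 𝓝[>] 0)
    (F := fun h x => h⁻¹ * max (min (u x) (t + h) - t) 0) (bound := fun _ => 1)
    (u := {x | t < u x}.indicator 1)
    (.of_forall fun h => Continuous.comp_aestronglyMeasurable
      (g := fun y : ℝ => h⁻¹ * max (min y (t + h) - t) 0) (by fun_prop)
      hu_int.aestronglyMeasurable)
    (h_pos.mono fun h hh x => abs_inv_mul_posPart_min_sub_le_one hh t (u x))
    (locallyIntegrable_const 1) fun x => tendsto_inv_mul_posPart_min_sub t (u x)
  refine le_of_tendsto_of_tendsto h_lim hd.hasDerivAt.tendsto_slope_zero_right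
    (h_pos.mono fun h hh => ?_)
  simp_rw [mul_assoc, integral_const_mul, smul_eq_mul]
  exact mul_le_mul_of_nonneg_left
    (hu.integral_posPart_min_sub_mul_div2_le hu_int ht (le_add_of_nonneg_right hh.le) hz)
    (inv_nonneg.2 hh.le)

lemma HasBV.ae_finPer_and_Per_le_deriv_truncTV (hu : HasBV u) (hu_int : Integrable u) :
    ∀ᵐ t ∂volume.restrict (Ioi 0),
      FinPer {x | t < u x} ∧ Per {x | t < u x} ≤ deriv (truncTV u) t := by
  rw [ae_restrict_iff' measurableSet_Ioi]
  filter_upwards [((hu.monotoneOn_truncTV hu_int).mono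
    Ioi_subset_Ici_self).ae_differentiableWithinAt_of_mem] with t hd ht
  have h_le (z : E2 → E2) (hz : IsTestField z) :=
    hu.integral_indicator_mul_div2_le_deriv_truncTV hu_int (le_of_lt ht)
      ((hd ht).differentiableAt (isOpen_Ioi.mem_nhds ht)) hz
  exact ⟨hasBV_of_forall_le h_le, TV_le_of_forall_le h_le⟩

lemma HasBV.integrableOn_deriv_truncTV (hu : HasBV u) (hu_int : Integrable u) :
    IntegrableOn (deriv (truncTV u)) (Ioi 0) :=
  integrableOn_Ioi_deriv_of_monotoneOn_Ici (hu.monotoneOn_truncTV hu_int)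
    fun _ => hu.truncTV_le hu_int

lemma HasBV.setIntegral_deriv_truncTV_le (hu : HasBV u) (hu_int : Integrable u) :
    ∫ t in Ioi 0, deriv (truncTV u) t ≤ TV u :=
  (setIntegral_Ioi_deriv_le_of_monotoneOn_Ici (hu.monotoneOn_truncTV hu_int)
    fun _ => hu.truncTV_le hu_int).trans (sub_le_self _ (hu.truncTV_nonneg hu_int le_rfl))

end Coarea

section Cheeger

variable {D A : Set E2} {u : E2 → ℝ}

lemma volR_nonneg (A : Set E2) : 0 ≤ volR A :=
  ENNReal.toReal_nonneg

lemma cheegerConst_nonneg (D : Set E2) : 0 ≤ cheegerConst D := by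
  refine Real.sInf_nonneg ?_
  rintro _ ⟨A, -, hA, -, -, rfl⟩
  exact div_nonneg hA.TV_nonneg (volR_nonneg A)

lemma cheegerConst_le_Per_div_volR (hA : MeasurableSet A) (hA_fin : FinPer A) (hAD : A ⊆ D)
    (hA_vol : 0 < volR A) : cheegerConst D ≤ Per A / volR A := by
  refine csInf_le ⟨0, ?_⟩ ⟨A, hA, hA_fin, hAD, hA_vol, rfl⟩
  rintro _ ⟨B, -, hB, -, -, rfl⟩
  exact div_nonneg hB.TV_nonneg (volR_nonneg B)

lemma cheegerConst_mul_volR_le_Per (hA : NullMeasurableSet A) (hA_fin : FinPer A) (hAD : A ⊆ D) :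
    cheegerConst D * volR A ≤ Per A := by
  rcases (volR_nonneg A).eq_or_lt with h_vol | h_vol
  · rw [← h_vol, mul_zero]
    exact hA_fin.TV_nonneg
  obtain ⟨B, hBA, hB, h_ae⟩ := hA.exists_measurable_subset_ae_eq
  have h_tv : tvSet (B.indicator 1) = tvSet (A.indicator 1) :=
    tvSet_congr_ae (indicator_ae_eq_of_ae_eq_set h_ae)
  have h_fin : FinPer B := by rwa [FinPer, HasBV, h_tv]
  have h_per : Per B = Per A := by rw [Per, Per, TV, TV, h_tv]
  have h_volR : volR B = volR A := congrArg ENNReal.toReal (measure_congr h_ae)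
  rw [← le_div_iff₀ h_vol, ← h_volR, ← h_per]
  exact cheegerConst_le_Per_div_volR hB h_fin (hBA.trans hAD) (h_volR ▸ h_vol)

lemma measurable_volR_superlevel (u : E2 → ℝ) : Measurable (fun t : ℝ => volR {x | t < u x}) :=
  Measurable.ennreal_toReal <| Antitone.measurable fun _ _ hst =>
    measure_mono fun _ hx => lt_of_le_of_lt hst hx

lemma integral_posPart_eq_setIntegral_volR (hu : Integrable u) :
    ∫ x, max (u x) 0 = ∫ t in Ioi 0, volR {x | t < u x} := by
  rw [hu.pos_part.integral_eq_integral_meas_lt (.of_forall fun x => le_max_right _ _)]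
  refine setIntegral_congr_fun measurableSet_Ioi fun t (ht : 0 < t) => ?_
  simp only [Measure.real, volR, lt_max_iff, ht.not_gt, or_false]

lemma HasBV.ae_cheegerConst_mul_volR_le_Per (hu : HasBV u) (hu_int : Integrable u)
    (hu_le : ∀ x ∉ D, u x ≤ 0) :
    ∀ᵐ t ∂volume.restrict (Ioi 0), cheegerConst D * volR {x | t < u x} ≤ Per {x | t < u x} := by
  filter_upwards [hu.ae_finPer_and_Per_le_deriv_truncTV hu_int, ae_restrict_mem measurableSet_Ioi]
    with t h_per (ht : 0 < t)
  exact cheegerConst_mul_volR_le_Per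
    (nullMeasurableSet_lt aemeasurable_const hu_int.aemeasurable) h_per.1
    fun x hx => not_imp_comm.1 (hu_le x) (ht.trans hx).not_ge

lemma HasBV.setIntegral_deriv_truncTV_le_of_TV_eq (hu : HasBV u) (hu_int : Integrable u)
    (h_eq : TV u = cheegerConst D * ∫ x, u x) :
    ∫ t in Ioi 0, deriv (truncTV u) t ≤ ∫ t in Ioi 0, cheegerConst D * volR {x | t < u x} :=
  calc ∫ t in Ioi 0, deriv (truncTV u) t
      ≤ cheegerConst D * ∫ x, u x := (hu.setIntegral_deriv_truncTV_le hu_int).trans_eq h_eq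
    _ ≤ cheegerConst D * ∫ x, max (u x) 0 := mul_le_mul_of_nonneg_left
        (integral_mono hu_int hu_int.pos_part fun x => le_max_left _ _) (cheegerConst_nonneg D)
    _ = ∫ t in Ioi 0, cheegerConst D * volR {x | t < u x} := by
        rw [integral_const_mul, integral_posPart_eq_setIntegral_volR hu_int]

end Cheeger

theorem stmt7_general (D : Set E2) (u : E2 → ℝ) (hle : ∀ x ∉ D, u x ≤ 0)
    (hint : Integrable u volume) (hbv : HasBV u)
    (heq : TV u = cheegerConst D * ∫ x, u x) :
    ∀ᵐ t : ℝ ∂volume, 0 < t →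
      FinPer {x | t < u x} ∧ Per {x | t < u x} = cheegerConst D * volR {x | t < u x} := by
  refine (ae_restrict_iff' measurableSet_Ioi).1 ?_
  have h_per := hbv.ae_finPer_and_Per_le_deriv_truncTV hint
  have h_cheeger := hbv.ae_cheegerConst_mul_volR_le_Per hint hle
  have h_le : (fun t => cheegerConst D * volR {x | t < u x})
      ≤ᵐ[volume.restrict (Ioi 0)] deriv (truncTV u) := by
    filter_upwards [h_per, h_cheeger] with t h_per_t h_cheeger_t
    exact h_cheeger_t.trans h_per_t.2
  have h_deriv := hbv.integrableOn_deriv_truncTV hint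
  have h_vol : IntegrableOn (fun t => cheegerConst D * volR {x | t < u x}) (Ioi 0) :=
    h_deriv.mono_nonneg ((measurable_volR_superlevel u).const_mul _).aestronglyMeasurable
      (.of_forall fun t => mul_nonneg (cheegerConst_nonneg D) (volR_nonneg _)) h_le
  have h_eq := (integral_eq_iff_of_ae_le h_vol h_deriv h_le).1
    ((integral_mono_ae h_vol h_deriv h_le).antisymm
      (hbv.setIntegral_deriv_truncTV_le_of_TV_eq hint heq))
  filter_upwards [h_per, h_cheeger, h_eq] with t h_per_t h_cheeger_t h_eq_t
  exact ⟨h_per_t.1, (h_per_t.2.trans_eq h_eq_t.symm).antisymm h_cheeger_t⟩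

/-- equality in the Cheeger inequality forces a.e. level sets to be Cheeger sets. -/
theorem stmt7 (D : Set E2) (hDo : IsOpen D) (hDb : Bornology.IsBounded D)
    (E₀ : Set E2) (hE₀ : IsCheegerSet D E₀)
    (u : E2 → ℝ) (hpos : ∀ x, 0 ≤ u x) (hzero : ∀ x ∉ D, u x = 0)
    (hint : Integrable u volume) (hbv : HasBV u)
    (heq : TV u = cheegerConst D * ∫ x, u x) :
    ∀ᵐ t : ℝ ∂volume, 0 < t →
      (0 < volR {x | t < u x} →
        Per {x | t < u x} = cheegerConst D * volR {x | t < u x}) := by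
  filter_upwards [stmt7_general D u (fun x hx => (hzero x hx).le) hint hbv heq] with t h ht _
  exact (h ht).2

end
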